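/- arXiv:math/0509438 — 2 statements merged into one kernel-verified Lean document; each statement's English description precedes it below -/
import Mathlib

section
/- Let D be a category with finite products and terminal object p, G, G', G'' group objects of D, a: M×G → M a right action of G on an object M, and let f: M → G' and f': G' → G'' be arrows of D. Form the difference arrow Δf: M×G → G' of f with respect to the action a, and the difference arrow Δf': G'×G' → G'' of f' with respect to the right translation action of G' on itself (x·h := m'∘(x,h)). Then the chain rule Δ(f'∘f)∘(u,g) = Δf'∘(f∘u, Δf∘(u,g)) holds for all arrows u: Z → M and g: Z → G; equivalently, Δ(f'∘f) = Δf'∘(f∘pr_M, Δf) as arrows M×G → G''. -/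
open CategoryTheory CategoryTheory.Limits

noncomputable section

universe v u

namespace DiffCalc

variable {D : Type u} [Category.{v} D] [HasTerminal D] [HasBinaryProducts D]

/-- The multiplication of two generalized elements `a, b : Z ⟶ X` induced by an arrow
`m : X ⨯ X ⟶ X`. -/
def gmul {X Z : D} (m : X ⨯ X ⟶ X) (a b : Z ⟶ X) : Z ⟶ X :=
  prod.lift a b ≫ m

/-- A group object structure on an object `X` of a category with finite products, with the
group axioms expressed for (generic) generalized elements. -/
structure GroupStr (X : D) where
  mul : X ⨯ X ⟶ X
  inv : X ⟶ X
  one : ⊤_ D ⟶ X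
  mul_assoc' : ∀ {Z : D} (a b c : Z ⟶ X),
    gmul mul (gmul mul a b) c = gmul mul a (gmul mul b c)
  one_mul' : ∀ {Z : D} (a : Z ⟶ X), gmul mul (terminal.from Z ≫ one) a = a
  mul_one' : ∀ {Z : D} (a : Z ⟶ X), gmul mul a (terminal.from Z ≫ one) = a
  mul_inv' : ∀ {Z : D} (a : Z ⟶ X), gmul mul a (a ≫ inv) = terminal.from Z ≫ one
  inv_mul' : ∀ {Z : D} (a : Z ⟶ X), gmul mul (a ≫ inv) a = terminal.from Z ≫ one

/-- The unit generalized element `1 : Z ⟶ X` of a group object. -/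
def gone {X : D} (s : GroupStr X) (Z : D) : Z ⟶ X :=
  terminal.from Z ≫ s.one

/-- The group of generalized elements `Z ⟶ X` of a group object `X`. -/
def homGroup {X : D} (s : GroupStr X) (Z : D) : Group (Z ⟶ X) where
  mul a b := gmul s.mul a b
  one := gone s Z
  inv a := a ≫ s.inv
  mul_assoc := s.mul_assoc'
  one_mul := s.one_mul'
  mul_one := s.mul_one'
  inv_mul_cancel := s.inv_mul'

/-- A morphism of group objects, in generalized-element form. -/
structure IsGroupHom {X Y : D} (sX : GroupStr X) (sY : GroupStr Y) (f : X ⟶ Y) : Prop where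
  map_mul : ∀ {Z : D} (a b : Z ⟶ X), gmul sX.mul a b ≫ f = gmul sY.mul (a ≫ f) (b ≫ f)
  map_inv : ∀ {Z : D} (a : Z ⟶ X), (a ≫ sX.inv) ≫ f = (a ≫ f) ≫ sY.inv
  map_one : ∀ (Z : D), gone sX Z ≫ f = gone sY Z

/-- A `U`-family of morphisms of group objects `l : U ⨯ G ⟶ G'`, in
generalized-element form. -/
structure IsGroupHomFamily {U G G' : D} (sG : GroupStr G) (sG' : GroupStr G')
    (l : U ⨯ G ⟶ G') : Prop where
  map_mul : ∀ {Z : D} (u : Z ⟶ U) (g₁ g₂ : Z ⟶ G),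
    prod.lift u (gmul sG.mul g₁ g₂) ≫ l =
      gmul sG'.mul (prod.lift u g₁ ≫ l) (prod.lift u g₂ ≫ l)
  map_inv : ∀ {Z : D} (u : Z ⟶ U) (g : Z ⟶ G),
    prod.lift u (g ≫ sG.inv) ≫ l = (prod.lift u g ≫ l) ≫ sG'.inv
  map_one : ∀ {Z : D} (u : Z ⟶ U), prod.lift u (gone sG Z) ≫ l = gone sG' Z

/-- A right action of a group object `G` on an object `M`, in generalized-element form. -/
structure IsRightAction {G M : D} (s : GroupStr G) (a : M ⨯ G ⟶ M) : Prop where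
  act_act : ∀ {Z : D} (m : Z ⟶ M) (g₁ g₂ : Z ⟶ G),
    prod.lift (prod.lift m g₁ ≫ a) g₂ ≫ a = prod.lift m (gmul s.mul g₁ g₂) ≫ a
  act_one : ∀ {Z : D} (m : Z ⟶ M), prod.lift m (gone s Z) ≫ a = m

/-- The difference arrow `Δf : M ⨯ G ⟶ G'` of `f : M ⟶ G'` with respect to a right action
`a : M ⨯ G ⟶ M`:  `Δf(u,g) = (f u)⁻¹ ⬝ f (u ⬝ g)`. -/
def diffArrow {M G G' : D} (sG' : GroupStr G') (a : M ⨯ G ⟶ M) (f : M ⟶ G') :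
    M ⨯ G ⟶ G' :=
  gmul sG'.mul ((prod.fst ≫ f) ≫ sG'.inv) (a ≫ f)

section ChainRule

variable {M G G' G'' Z : D}

theorem GroupStr.gmul_inv_cancel_left (s : GroupStr G) (x y : Z ⟶ G) :
    gmul s.mul x (gmul s.mul (x ≫ s.inv) y) = y :=
  letI := homGroup s Z
  mul_inv_cancel_left x y

theorem lift_comp_diffArrow (s : GroupStr G') (a : M ⨯ G ⟶ M) (f : M ⟶ G')
    (u : Z ⟶ M) (g : Z ⟶ G) :
    prod.lift u g ≫ diffArrow s a f =
      gmul s.mul ((u ≫ f) ≫ s.inv) ((prod.lift u g ≫ a) ≫ f) := by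
  simp only [diffArrow, gmul, prod.comp_lift_assoc, prod.lift_fst_assoc, Category.assoc]

theorem gmul_lift_comp_diffArrow (s : GroupStr G') (a : M ⨯ G ⟶ M) (f : M ⟶ G')
    (u : Z ⟶ M) (g : Z ⟶ G) :
    gmul s.mul (u ≫ f) (prod.lift u g ≫ diffArrow s a f) = (prod.lift u g ≫ a) ≫ f := by
  rw [lift_comp_diffArrow, s.gmul_inv_cancel_left]

theorem diffArrow_chain_rule_general (sG' : GroupStr G') (sG'' : GroupStr G'')
    (a : M ⨯ G ⟶ M) (f : M ⟶ G') (f' : G' ⟶ G'') (u : Z ⟶ M) (g : Z ⟶ G) :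
    prod.lift u g ≫ diffArrow sG'' a (f ≫ f') =
      prod.lift (u ≫ f) (prod.lift u g ≫ diffArrow sG' a f) ≫
        diffArrow sG'' sG'.mul f' := by
  have translate : prod.lift (u ≫ f) (prod.lift u g ≫ diffArrow sG' a f) ≫ sG'.mul =
      (prod.lift u g ≫ a) ≫ f :=
    gmul_lift_comp_diffArrow sG' a f u g
  calc prod.lift u g ≫ diffArrow sG'' a (f ≫ f')
    _ = gmul sG''.mul (((u ≫ f) ≫ f') ≫ sG''.inv) (((prod.lift u g ≫ a) ≫ f) ≫ f') := by
      simp only [lift_comp_diffArrow, Category.assoc]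
    _ = prod.lift (u ≫ f) (prod.lift u g ≫ diffArrow sG' a f) ≫
          diffArrow sG'' sG'.mul f' := by
      rw [lift_comp_diffArrow sG'' sG'.mul, translate]

end ChainRule

/-- chain rule for difference arrows.  If `Δf` is taken with respect to a
right action `a` of `G` on `M` and `Δf'` with respect to the right translation action of
`G'` on itself, then `Δ(f'∘f)(u,g) = Δf'(f∘u, Δf(u,g))`, i.e.
`Δ(f'∘f) = Δf' ∘ (f∘pr_M, Δf)`. -/
theorem diffArrow_chain_rule
    {D : Type u} [Category.{v} D] [HasTerminal D] [HasBinaryProducts D]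
    {G G' G'' M : D} (sG : GroupStr G) (sG' : GroupStr G') (sG'' : GroupStr G'')
    (a : M ⨯ G ⟶ M) (ha : IsRightAction sG a) (f : M ⟶ G') (f' : G' ⟶ G'') :
    (∀ (Z : D) (u : Z ⟶ M) (g : Z ⟶ G),
      prod.lift u g ≫ diffArrow sG'' a (f ≫ f') =
        prod.lift (u ≫ f) (prod.lift u g ≫ diffArrow sG' a f) ≫
          diffArrow sG'' sG'.mul f') ∧
    (diffArrow sG'' a (f ≫ f') =
      prod.lift (prod.fst ≫ f) (diffArrow sG' a f) ≫ diffArrow sG'' sG'.mul f') := by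
  refine ⟨fun Z u g => diffArrow_chain_rule_general sG' sG'' a f f' u g, ?_⟩
  simpa using diffArrow_chain_rule_general sG' sG'' a f f' prod.fst prod.snd

end DiffCalc
end
end

section
/- Let D be a category with finite products and terminal object p, and let G and G' be group objects of D. Let G act on itself on the right by translation, and for an arrow f: G → G' of D let Δf: G×G → G' be the difference arrow Δf(u,g) = (f(u))^{-1}·f(u·g). Then the following are equivalent: (i) Δf is a G-family of morphisms of group objects; (ii) f is left affine, i.e. f = c·h in the group Hom(G,G') for some point c: p → G' (composed with the unique arrow G → p) and some morphism of group objects h: G → G'. Moreover, in that case Δf(u,g) = h(g), i.e. Δf = h∘pr_G. -/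
open CategoryTheory CategoryTheory.Limits

noncomputable section

universe v u

namespace DiffCalc

variable {D : Type u} [Category.{v} D] [HasTerminal D] [HasBinaryProducts D]

/-!
The definition of `Δf` says exactly that `f (u ⬝ g) = f u ⬝ Δf (u, g)`. At `u = 1` this reads
`f = f 1 ⬝ Δf (1, -)`, which exhibits `f` as left affine as soon as `Δf (1, -)` is a morphism of
group objects. Conversely, if `f = c ⬝ h`, then `f (u ⬝ g) = c ⬝ h u ⬝ h g = f u ⬝ h g`, so that
`Δf (u, g) = h g`.
-/

section GeneralizedElements

variable {W X Z : D}

omit [HasTerminal D] in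
theorem comp_gmul (m : X ⨯ X ⟶ X) (k : W ⟶ Z) (a b : Z ⟶ X) :
    k ≫ gmul m a b = gmul m (k ≫ a) (k ≫ b) := by
  rw [gmul, gmul, prod.comp_lift_assoc]

omit [HasTerminal D] in
theorem gmul_fst_snd (m : X ⨯ X ⟶ X) : gmul m prod.fst prod.snd = m := by
  rw [gmul, prod.lift_fst_snd, Category.id_comp]

theorem gmul_inv_eq_iff_eq_gmul (s : GroupStr X) {a b c : Z ⟶ X} :
    gmul s.mul (a ≫ s.inv) b = c ↔ b = gmul s.mul a c :=
  letI := homGroup s Z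
  inv_mul_eq_iff_eq_mul

end GeneralizedElements

section Slice

variable {U X Y Z G G' : D}

/-- The arrow `l(u, -) : X ⟶ Y` obtained by fixing the first argument of `l : U ⨯ X ⟶ Y` at a
point `u` of `U`. It is the member at `u` of a family `l` of arrows, and the orbit map of `u` when
`l` is an action. -/
def slice (l : U ⨯ X ⟶ Y) (u : ⊤_ D ⟶ U) : X ⟶ Y :=
  prod.lift (terminal.from X ≫ u) (𝟙 X) ≫ l

theorem comp_slice (l : U ⨯ X ⟶ Y) (u : ⊤_ D ⟶ U) (k : Z ⟶ X) :
    k ≫ slice l u = prod.lift (terminal.from Z ≫ u) k ≫ l := by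
  rw [slice, prod.comp_lift_assoc, terminal.comp_from_assoc, Category.comp_id]

theorem slice_mul_one (s : GroupStr X) : slice s.mul s.one = 𝟙 X :=
  s.one_mul' (𝟙 X)

theorem IsGroupHomFamily.isGroupHom_slice {sG : GroupStr G} {sG' : GroupStr G'}
    {l : U ⨯ G ⟶ G'} (hl : IsGroupHomFamily sG sG' l) (u : ⊤_ D ⟶ U) :
    IsGroupHom sG sG' (slice l u) where
  map_mul a b := by simp only [comp_slice, hl.map_mul]
  map_inv a := by simp only [comp_slice, hl.map_inv]
  map_one Z := by simp only [comp_slice, hl.map_one]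

theorem IsGroupHom.isGroupHomFamily_snd_comp {sG : GroupStr G} {sG' : GroupStr G'} {h : G ⟶ G'}
    (hh : IsGroupHom sG sG' h) (U : D) :
    IsGroupHomFamily sG sG' ((prod.snd : U ⨯ G ⟶ G) ≫ h) where
  map_mul u a b := by simp only [prod.lift_snd_assoc, hh.map_mul]
  map_inv u a := by simp only [prod.lift_snd_assoc, hh.map_inv]
  map_one u := by simp only [prod.lift_snd_assoc, hh.map_one]

end Slice

section DiffArrow

variable {M G G' : D} {sG : GroupStr G} {sG' : GroupStr G'}

theorem diffArrow_eq_iff {a : M ⨯ G ⟶ M} {f : M ⟶ G'} {l : M ⨯ G ⟶ G'} :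
    diffArrow sG' a f = l ↔ a ≫ f = gmul sG'.mul (prod.fst ≫ f) l :=
  gmul_inv_eq_iff_eq_gmul sG'

theorem slice_comp_eq_gmul_slice_diffArrow (sG' : GroupStr G') (a : M ⨯ G ⟶ M) (f : M ⟶ G')
    (x : ⊤_ D ⟶ M) :
    slice a x ≫ f =
      gmul sG'.mul (terminal.from G ≫ x ≫ f) (slice (diffArrow sG' a f) x) := by
  have comp_eq : a ≫ f = gmul sG'.mul (prod.fst ≫ f) (diffArrow sG' a f) :=
    diffArrow_eq_iff.1 rfl
  rw [slice, Category.assoc, comp_eq, comp_gmul, prod.lift_fst_assoc, Category.assoc, slice]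

theorem eq_gmul_slice_diffArrow_one (sG : GroupStr G) (sG' : GroupStr G') (f : G ⟶ G') :
    f = gmul sG'.mul (terminal.from G ≫ sG.one ≫ f)
      (slice (diffArrow sG' sG.mul f) sG.one) := by
  rw [← slice_comp_eq_gmul_slice_diffArrow, slice_mul_one, Category.id_comp]

theorem IsGroupHom.diffArrow_const_gmul {h : G ⟶ G'} (hh : IsGroupHom sG sG' h)
    (c : ⊤_ D ⟶ G') :
    diffArrow sG' sG.mul (gmul sG'.mul (terminal.from G ≫ c) h) = prod.snd ≫ h := by
  have mul_comp : sG.mul ≫ h = gmul sG'.mul (prod.fst ≫ h) (prod.snd ≫ h) := by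
    rw [← hh.map_mul, gmul_fst_snd]
  rw [diffArrow_eq_iff]
  simp only [comp_gmul, terminal.comp_from_assoc, mul_comp, sG'.mul_assoc']

end DiffArrow

/-- for `f : G ⟶ G'` and the difference arrow `Δf` taken with respect to the
right translation action of `G` on itself, `Δf` is a `G`-family of morphisms of group
objects iff `f` is left affine (`f = c ⬝ h` with `c` a point and `h` a morphism of group
objects); and in that case `Δf = h ∘ pr_G`. -/
theorem diffArrow_family_iff_affine
    {D : Type u} [Category.{v} D] [HasTerminal D] [HasBinaryProducts D]
    {G G' : D} (sG : GroupStr G) (sG' : GroupStr G') (f : G ⟶ G') :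
    (IsGroupHomFamily sG sG' (diffArrow sG' sG.mul f) ↔
      ∃ (c : ⊤_ D ⟶ G') (h : G ⟶ G'), IsGroupHom sG sG' h ∧
        f = gmul sG'.mul (terminal.from G ≫ c) h) ∧
    (∀ (c : ⊤_ D ⟶ G') (h : G ⟶ G'), IsGroupHom sG sG' h →
      f = gmul sG'.mul (terminal.from G ≫ c) h →
      diffArrow sG' sG.mul f = prod.snd ≫ h) := by
  refine ⟨⟨fun hΔ => ?_, ?_⟩, ?_⟩
  · exact ⟨sG.one ≫ f, slice (diffArrow sG' sG.mul f) sG.one, hΔ.isGroupHom_slice sG.one,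
      eq_gmul_slice_diffArrow_one sG sG' f⟩
  · rintro ⟨c, h, hh, rfl⟩
    rw [hh.diffArrow_const_gmul c]
    exact hh.isGroupHomFamily_snd_comp G
  · rintro c h hh rfl
    exact hh.diffArrow_const_gmul c

end DiffCalc
end
end
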